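/- arXiv:2206.12919 — 6 statements merged into one kernel-verified Lean document; each statement's English description precedes it below -/
import Mathlib

section
/- Suppose E[ε | Z, U] = 0 almost surely, W is conditionally independent of the pair (A, Z) given U, and h₀ : 𝓐 × 𝓦 → ℝ is measurable and integrable (h₀(A,W) ∈ L¹) satisfying E[k₀(A,U) − h₀(A,W) | A, U] = 0 almost surely. Then E[Y − h₀(A,W) | Z] = 0 almost surely. -/
open MeasureTheory ProbabilityTheory

lemma icc_rect {Ω α β : Type*} [MeasurableSpace Ω] [MeasurableSpace α] [MeasurableSpace β]
    {P : Measure Ω} {X : Ω → α} {Y : Ω → β} (hX : Measurable X) (hY : Measurable Y)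
    {f g : Ω → ℝ} (hf : Integrable f P) (hg : Integrable g P)
    (h : ∀ s t, MeasurableSet s → MeasurableSet t →
      ∫ ω in X ⁻¹' s ∩ Y ⁻¹' t, f ω ∂P = ∫ ω in X ⁻¹' s ∩ Y ⁻¹' t, g ω ∂P)
    (S : Set (α × β)) (hS : MeasurableSet S) :
    ∫ ω in (fun ω => (X ω, Y ω)) ⁻¹' S, f ω ∂P = ∫ ω in (fun ω => (X ω, Y ω)) ⁻¹' S, g ω ∂P := by
  have hXY : Measurable (fun ω => (X ω, Y ω)) := hX.prodMk hY
  have huniv : ∫ ω, f ω ∂P = ∫ ω, g ω ∂P := by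
    simpa using h Set.univ Set.univ MeasurableSet.univ MeasurableSet.univ
  induction S, hS using MeasurableSpace.induction_on_inter generateFrom_prod.symm
    isPiSystem_prod with
  | empty => simp
  | basic t ht =>
    obtain ⟨a, ha, b, hb, rfl⟩ := ht
    exact h a b ha hb
  | compl t ht ih =>
    rw [Set.preimage_compl, setIntegral_compl (hXY ht) hf, setIntegral_compl (hXY ht) hg, ih, huniv]
  | iUnion t hd ht ih =>
    rw [Set.preimage_iUnion, integral_iUnion (fun i => hXY (ht i)) _ hf.integrableOn,
      integral_iUnion (fun i => hXY (ht i)) _ hg.integrableOn]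
    · simp_rw [ih]
    all_goals exact fun i j hij => (hd hij).preimage _

lemma icc_pull {Ω : Type*} {m mΩ : MeasurableSpace Ω} {P : Measure Ω} [IsProbabilityMeasure P]
    (hm : m ≤ mΩ) {f h : Ω → ℝ} (hh : StronglyMeasurable[m] h) (hfh : Integrable (h * f) P)
    (hf : Integrable f P) {D : Set Ω} (hD : MeasurableSet[m] D) :
    ∫ ω in D, h ω * f ω ∂P = ∫ ω in D, h ω * (P[f | m]) ω ∂P := by
  have h1 := setIntegral_condExp hm hfh hD
  have h2 := condExp_mul_of_stronglyMeasurable_left hh hfh hf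
  change ∫ ω in D, (h * f) ω ∂P = _
  rw [← h1]
  exact setIntegral_congr_ae (hm _ hD) (h2.mono fun ω hω _ => by simpa using hω)

lemma icc_ind {Ω : Type*} {mΩ : MeasurableSpace Ω} {P : Measure Ω}
    (f : Ω → ℝ) {D B : Set Ω} (hB : MeasurableSet B) :
    ∫ ω in D ∩ B, f ω ∂P = ∫ ω in D, f ω * B.indicator (fun _ => (1:ℝ)) ω ∂P := by
  rw [← setIntegral_indicator hB]
  congr 1
  ext ω
  by_cases hω : ω ∈ B <;> simp [hω]

lemma icc_bdd {Ω : Type*} {m mΩ : MeasurableSpace Ω} {P : Measure Ω} [IsProbabilityMeasure P]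
    (B : Set Ω) : ∀ᵐ ω ∂P, ‖(P[B.indicator (fun _ => (1:ℝ)) | m]) ω‖ ≤ 1 := by
  have := ae_bdd_condExp_of_ae_bdd (m := m) (μ := P) (R := 1)
    (f := B.indicator (fun _ => (1:ℝ)))
    (ae_of_all _ fun ω => by by_cases hω : ω ∈ B <;> simp [hω])
  simpa using this

lemma icc_ce {Ω α : Type*} [MeasurableSpace Ω] [mα : MeasurableSpace α]
    {P : Measure Ω} [IsProbabilityMeasure P] {X : Ω → α} (hX : Measurable X)
    {f g : Ω → ℝ} (hf : Integrable f P) (hg : Integrable g P)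
    (hgm : StronglyMeasurable[MeasurableSpace.comap X mα] g)
    (h : ∀ S, MeasurableSet S → ∫ ω in X ⁻¹' S, f ω ∂P = ∫ ω in X ⁻¹' S, g ω ∂P) :
    g =ᵐ[P] P[f | MeasurableSpace.comap X mα] := by
  refine ae_eq_condExp_of_forall_setIntegral_eq hX.comap_le hf (fun _ _ _ => hg.integrableOn) ?_
    hgm.aestronglyMeasurable
  rintro _ ⟨S, hS, rfl⟩ _
  exact (h S hS).symm

/-- **Lemma 3 (ICC paper).** Under the separable outcome model with
`E[ε | Z, U] = 0` a.s. and `W ⫫ (A, Z) | U`, any structural outcome bridge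
function `h₀` (i.e. `E[k₀(A,U) − h₀(A,W) | A, U] = 0` a.s.) satisfies the
observable conditional moment restriction `E[Y − h₀(A,W) | Z] = 0` a.s. -/
theorem icc_lemma3_obs_npiv_outcome
    {Ω 𝓐 𝓤 𝓩 𝓦 : Type*}
    [MeasurableSpace Ω] [StandardBorelSpace Ω] [Nonempty Ω]
    [MeasurableSpace 𝓐] [MeasurableSpace 𝓤] [MeasurableSpace 𝓩] [MeasurableSpace 𝓦]
    (P : Measure Ω) [IsProbabilityMeasure P]
    (A : Ω → 𝓐) (U : Ω → 𝓤) (Z : Ω → 𝓩) (W : Ω → 𝓦) (ε : Ω → ℝ)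
    (hA : Measurable A) (hU : Measurable U) (hZ : Measurable Z) (hW : Measurable W)
    (hε : Measurable ε) (hεInt : Integrable ε P)
    (k₀ : 𝓐 × 𝓤 → ℝ) (hk₀ : Measurable k₀)
    (hk₀Int : Integrable (fun ω => k₀ (A ω, U ω)) P)
    -- E[ε | Z, U] = 0 almost surely
    (hcond : P[ε | MeasurableSpace.comap (fun ω => (Z ω, U ω)) inferInstance] =ᵐ[P] 0)
    -- W ⫫ (A, Z) | U
    (hWindep : CondIndepFun (MeasurableSpace.comap U inferInstance) hU.comap_le
      W (fun ω => (A ω, Z ω)) P)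
    (h₀ : 𝓐 × 𝓦 → ℝ) (hh₀ : Measurable h₀)
    (hh₀Int : Integrable (fun ω => h₀ (A ω, W ω)) P)
    -- outcome bridge condition: E[k₀(A,U) − h₀(A,W) | A, U] = 0 a.s.
    (hbridge : P[(fun ω => k₀ (A ω, U ω) - h₀ (A ω, W ω)) |
      MeasurableSpace.comap (fun ω => (A ω, U ω)) inferInstance] =ᵐ[P] 0) :
    -- observable moment restriction: E[Y − h₀(A,W) | Z] = 0 a.s., where Y = k₀(A,U) + ε
    P[(fun ω => (k₀ (A ω, U ω) + ε ω) - h₀ (A ω, W ω)) |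
      MeasurableSpace.comap Z inferInstance] =ᵐ[P] 0 := by
  have hAU : Measurable (fun ω => (A ω, U ω)) := hA.prodMk hU
  have hAZ : Measurable (fun ω => (A ω, Z ω)) := hA.prodMk hZ
  have hI : ∀ {B : Set Ω}, MeasurableSet B → Integrable (B.indicator (fun _ => (1:ℝ))) P :=
    fun hB => (integrable_const 1).indicator hB
  have hIb : ∀ (B : Set Ω), ∀ᵐ ω ∂P, ‖B.indicator (fun _ => (1:ℝ)) ω‖ ≤ 1 :=
    fun B => ae_of_all _ fun ω => by by_cases hω : ω ∈ B <;> simp [hω]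
  have hUle : MeasurableSpace.comap U inferInstance ≤
      MeasurableSpace.comap (fun ω => (A ω, U ω)) inferInstance := by
    rintro _ ⟨s, hs, rfl⟩
    exact ⟨Prod.snd ⁻¹' s, measurable_snd hs, rfl⟩
  rw [condIndepFun_iff_condExp_inter_preimage_eq_mul hW hAZ] at hWindep
  -- step 1
  have step1 : ∀ w, MeasurableSet w → ∀ S : Set ((𝓐 × 𝓩) × 𝓤), MeasurableSet S →
      ∫ ω in (fun ω => ((A ω, Z ω), U ω)) ⁻¹' S, (W ⁻¹' w).indicator (fun _ => (1:ℝ)) ω ∂P =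
      ∫ ω in (fun ω => ((A ω, Z ω), U ω)) ⁻¹' S,
        (P[(W ⁻¹' w).indicator (fun _ => (1:ℝ)) | MeasurableSpace.comap U inferInstance]) ω ∂P := by
    intro w hw
    refine icc_rect hAZ hU (hI (hW hw)) integrable_condExp ?_
    intro s t hs ht
    have h1 := hWindep w s hw hs
    have hB := hAZ hs
    have hV : MeasurableSet[MeasurableSpace.comap U inferInstance] (U ⁻¹' t) := ⟨t, ht, rfl⟩
    rw [Set.inter_comm, icc_ind _ hB, icc_ind _ hB,
      icc_pull hU.comap_le stronglyMeasurable_condExp _ (hI hB) hV]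
    · rw [← setIntegral_congr_ae (hU ht) (h1.mono fun ω hω _ => hω),
        setIntegral_condExp hU.comap_le (hI ((hW hw).inter hB)) hV]
      congr 1
      ext ω
      by_cases h1 : ω ∈ W ⁻¹' w <;>
        by_cases h2 : ω ∈ (fun ω => (A ω, Z ω)) ⁻¹' s <;> simp [Set.indicator, h1, h2] <;> grind
    · exact (hI hB).bdd_mul integrable_condExp.1 (icc_bdd _)
  have step1' : ∀ w, MeasurableSet w →
      P[(W ⁻¹' w).indicator (fun _ => (1:ℝ)) | MeasurableSpace.comap U inferInstance] =ᵐ[P]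
      P[(W ⁻¹' w).indicator (fun _ => (1:ℝ)) |
        MeasurableSpace.comap (fun ω => (A ω, U ω)) inferInstance] := by
    intro w hw
    refine icc_ce hAU (hI (hW hw)) integrable_condExp (stronglyMeasurable_condExp.mono hUle) ?_
    intro S hS
    exact step1 w hw ((fun x : (𝓐 × 𝓩) × 𝓤 => (x.1.1, x.2)) ⁻¹' S)
      ((by fun_prop : Measurable (fun x : (𝓐 × 𝓩) × 𝓤 => (x.1.1, x.2))) hS)
  have key : ∀ C, MeasurableSet C →
      ∫ ω in Z ⁻¹' C, (k₀ (A ω, U ω) - h₀ (A ω, W ω)) ∂P = 0 := by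
    intro C hC
    have hZC := hZ hC
    set p : Ω → ℝ := P[(Z ⁻¹' C).indicator (fun _ => (1:ℝ)) | (MeasurableSpace.comap (fun ω => (A ω, U ω)) inferInstance)] with hp
    have step2 : ∀ S : Set ((𝓐 × 𝓤) × 𝓦), MeasurableSet S →
        ∫ ω in (fun ω => ((A ω, U ω), W ω)) ⁻¹' S, (Z ⁻¹' C).indicator (fun _ => (1:ℝ)) ω ∂P =
        ∫ ω in (fun ω => ((A ω, U ω), W ω)) ⁻¹' S, p ω ∂P := by
      refine icc_rect hAU hW (hI hZC) integrable_condExp ?_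
      intro s w hs hw
      have hD : MeasurableSet[(MeasurableSpace.comap (fun ω => (A ω, U ω)) inferInstance)] ((fun ω => (A ω, U ω)) ⁻¹' s) := ⟨s, hs, rfl⟩
      have hWw := hW hw
      have e1 := step1 w hw ((fun x : (𝓐 × 𝓩) × 𝓤 => (x.1.1, x.2)) ⁻¹' s ∩
        (fun x => x.1.2) ⁻¹' C)
        (((by fun_prop : Measurable (fun x : (𝓐 × 𝓩) × 𝓤 => (x.1.1, x.2))) hs).inter
          ((by fun_prop : Measurable (fun x : (𝓐 × 𝓩) × 𝓤 => x.1.2)) hC))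
      change ∫ ω in (fun ω => (A ω, U ω)) ⁻¹' s ∩ Z ⁻¹' C, _ ∂P =
        ∫ ω in (fun ω => (A ω, U ω)) ⁻¹' s ∩ Z ⁻¹' C, _ ∂P at e1
      rw [icc_ind _ hZC, icc_ind _ hZC,
        icc_pull hAU.comap_le (stronglyMeasurable_condExp.mono hUle)
          ((hI hZC).bdd_mul integrable_condExp.1 (icc_bdd _)) (hI hZC) hD] at e1
      rw [icc_ind _ hWw, icc_ind _ hWw,
        icc_pull hAU.comap_le stronglyMeasurable_condExp
          ((hI hWw).bdd_mul integrable_condExp.1 (icc_bdd _)) (hI hWw) hD]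
      simp_rw [mul_comm ((Z ⁻¹' C).indicator _ _)]
      rw [e1]
      refine setIntegral_congr_ae (hAU hs) ((step1' w hw).mono fun ω hω _ => ?_)
      rw [hω, mul_comm]
    have hAUW : Measurable (fun ω => ((A ω, U ω), W ω)) := hAU.prodMk hW
    have hle : (MeasurableSpace.comap (fun ω => (A ω, U ω)) inferInstance) ≤ MeasurableSpace.comap (fun ω => ((A ω, U ω), W ω)) inferInstance := by
      rintro _ ⟨s, hs, rfl⟩
      exact ⟨Prod.fst ⁻¹' s, measurable_fst hs, rfl⟩
    have step2' := icc_ce hAUW (hI hZC) integrable_condExp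
      (stronglyMeasurable_condExp.mono hle) step2
    have hg : Integrable (fun ω => k₀ (A ω, U ω) - h₀ (A ω, W ω)) P := hk₀Int.sub hh₀Int
    have hgm : StronglyMeasurable[MeasurableSpace.comap (fun ω => ((A ω, U ω), W ω)) inferInstance]
        (fun ω => k₀ (A ω, U ω) - h₀ (A ω, W ω)) := by
      have : Measurable (fun x : (𝓐 × 𝓤) × 𝓦 => k₀ x.1 - h₀ (x.1.1, x.2)) := by fun_prop
      exact (this.comp (comap_measurable (fun ω => ((A ω, U ω), W ω)))).stronglyMeasurable
    have e2 := icc_ind (P := P) (fun ω => k₀ (A ω, U ω) - h₀ (A ω, W ω)) (D := Set.univ) hZC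
    rw [Set.univ_inter, icc_pull hAUW.comap_le hgm (hg.mul_bdd (hI hZC).1 (hIb _)) (hI hZC)
      MeasurableSet.univ] at e2
    rw [e2, setIntegral_congr_ae (g := fun ω => p ω * (k₀ (A ω, U ω) - h₀ (A ω, W ω)))
      MeasurableSet.univ (step2'.mono fun ω hω _ => by rw [← hω, mul_comm]),
      icc_pull hAU.comap_le stronglyMeasurable_condExp
        (hg.bdd_mul integrable_condExp.1 (icc_bdd _)) hg MeasurableSet.univ,
      setIntegral_congr_ae (g := fun _ => (0:ℝ)) MeasurableSet.univ
        (hbridge.mono fun ω hω _ => by rw [hω]; simp)]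
    simp
  have keyε : ∀ C, MeasurableSet C → ∫ ω in Z ⁻¹' C, ε ω ∂P = 0 := by
    intro C hC
    rw [← setIntegral_condExp (hZ.prodMk hU).comap_le hεInt
      (⟨Prod.fst ⁻¹' C, measurable_fst hC, rfl⟩ : MeasurableSet[MeasurableSpace.comap
        (fun ω => (Z ω, U ω)) inferInstance] (Z ⁻¹' C)),
      setIntegral_congr_ae (g := fun _ => (0:ℝ)) (hZ hC) (hcond.mono fun ω hω _ => by rw [hω]; simp)]
    simp
  symm
  refine icc_ce hZ ((hk₀Int.add hεInt).sub hh₀Int) (integrable_zero _ _ _)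
    stronglyMeasurable_zero ?_
  intro C hC
  have : ∀ ω, (k₀ (A ω, U ω) + ε ω) - h₀ (A ω, W ω) =
      (k₀ (A ω, U ω) - h₀ (A ω, W ω)) + ε ω := fun ω => by ring
  simp_rw [this]
  have hg : Integrable (fun ω => k₀ (A ω, U ω) - h₀ (A ω, W ω)) P := hk₀Int.sub hh₀Int
  rw [integral_add hg.integrableOn hεInt.integrableOn, key C hC, keyε C hC]
  simp
end

section
/- Suppose A and ε are conditionally independent given (η, U), and p : 𝓔 × ℝ × 𝓤 → ℝ is a nonnegative measurable conditional density of ε given (η, U) with respect to a σ-finite measure ν on 𝓔, that is, for every bounded measurable ψ : 𝓔 × ℝ × 𝓤 → ℝ one has E[ψ(ε, η, U)] = E[∫_𝓔 ψ(e, η, U) p(e, η, U) dν(e)]. Define k(a, v, u) := ∫_𝓔 g(a, u, e) p(e, v, u) dν(e), assuming all displayed integrands are integrable. Then: (a) E[Y | A, η, U] = k(A, η, U) almost surely; and (b) the regression identity E[∫_𝓐 k(a, η, U) π(a) dμ_A(a)] = J := E[∫_𝓐 g(a, U, ε) π(a) dμ_A(a)] holds. -/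
open MeasureTheory ProbabilityTheory

lemma icc_mass_one {Ω 𝓥 𝓔 : Type*} [MeasurableSpace Ω] [MeasurableSpace 𝓥] [MeasurableSpace 𝓔]
    (P : Measure Ω) [IsProbabilityMeasure P] (ν : Measure 𝓔) [SigmaFinite ν]
    (V : Ω → 𝓥) (ε : Ω → 𝓔) (hV : Measurable V)
    (p : 𝓔 × 𝓥 → ℝ) (hp : Measurable p)
    (hd : ∀ ψ : 𝓔 × 𝓥 → ℝ, Measurable ψ → (∃ C, ∀ x, |ψ x| ≤ C) →
      ∫ ω, ψ (ε ω, V ω) ∂P = ∫ ω, (∫ e, ψ (e, V ω) * p (e, V ω) ∂ν) ∂P) :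
    ∀ᵐ ω ∂P, ∫ e, p (e, V ω) ∂ν = 1 := by
  set r : 𝓥 → ℝ := fun v => ∫ e, p (e, v) ∂ν with hr
  have hrm : Measurable r := hp.stronglyMeasurable.integral_prod_left'.measurable
  set s : 𝓥 → ℝ := fun v => (r v - 1) / (1 + r v ^ 2) with hs
  have hsm : Measurable s := by fun_prop
  have b1 : ∀ x : ℝ, |(x - 1) / (1 + x ^ 2)| ≤ 2 := by
    intro x
    have h0 : 0 < 1 + x ^ 2 := by positivity
    rw [abs_le, le_div_iff₀ h0, div_le_iff₀ h0]
    constructor <;> nlinarith [sq_nonneg (x - 1), sq_nonneg (x + 1)]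
  have b2 : ∀ x : ℝ, |(x - 1) / (1 + x ^ 2) * x| ≤ 2 := by
    intro x
    have h0 : 0 < 1 + x ^ 2 := by positivity
    rw [div_mul_eq_mul_div, abs_le, le_div_iff₀ h0, div_le_iff₀ h0]
    constructor <;> nlinarith [sq_nonneg (x - 1), sq_nonneg (x + 1)]
  have h1 := hd (fun x => s x.2) (by fun_prop) ⟨2, fun x => b1 _⟩
  simp only [integral_const_mul] at h1
  change ∫ ω, s (V ω) ∂P = ∫ ω, s (V ω) * r (V ω) ∂P at h1
  have i1 : Integrable (fun ω => s (V ω)) P :=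
    Integrable.of_bound (hsm.comp hV).aestronglyMeasurable 2 (.of_forall fun ω => b1 _)
  have i2 : Integrable (fun ω => s (V ω) * r (V ω)) P :=
    Integrable.of_bound ((hsm.comp hV).mul (hrm.comp hV)).aestronglyMeasurable 2
      (.of_forall fun ω => b2 _)
  have h2 : ∫ ω, (s (V ω) * r (V ω) - s (V ω)) ∂P = 0 := by
    rw [integral_sub i2 i1, h1, sub_self]
  have e : ∀ ω, s (V ω) * r (V ω) - s (V ω) = (r (V ω) - 1) ^ 2 / (1 + r (V ω) ^ 2) := by
    intro ω; simp only [hs]; ring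
  have i3 : Integrable (fun ω => s (V ω) * r (V ω) - s (V ω)) P := i2.sub i1
  rw [integral_eq_zero_iff_of_nonneg _ i3] at h2
  · filter_upwards [h2] with ω hω
    rw [e] at hω
    have h0 : 1 + r (V ω) ^ 2 ≠ 0 := by positivity
    simp only [Pi.zero_apply, div_eq_zero_iff, h0, or_false] at hω
    have := pow_eq_zero_iff (two_ne_zero) |>.1 hω
    change r (V ω) = 1
    linarith
  · intro ω; simp only [e, Pi.zero_apply]; positivity

lemma icc_condDistrib {Ω 𝓥 𝓔 : Type*} [MeasurableSpace Ω] [MeasurableSpace 𝓥] [MeasurableSpace 𝓔]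
    [StandardBorelSpace 𝓔] [Nonempty 𝓔]
    (P : Measure Ω) [IsProbabilityMeasure P] (ν : Measure 𝓔) [SigmaFinite ν]
    (V : Ω → 𝓥) (ε : Ω → 𝓔) (hV : Measurable V) (hε : Measurable ε)
    (p : 𝓔 × 𝓥 → ℝ) (hp : Measurable p) (hp0 : ∀ x, 0 ≤ p x)
    (hd : ∀ ψ : 𝓔 × 𝓥 → ℝ, Measurable ψ → (∃ C, ∀ x, |ψ x| ≤ C) →
      ∫ ω, ψ (ε ω, V ω) ∂P = ∫ ω, (∫ e, ψ (e, V ω) * p (e, V ω) ∂ν) ∂P) :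
    ∀ᵐ v ∂(P.map V), condDistrib ε V P v = ν.withDensity (fun e => ENNReal.ofReal (p (e, v))) := by
  classical
  have hm := icc_mass_one P ν V ε hV p hp hd
  set r : 𝓥 → ℝ := fun v => ∫ e, p (e, v) ∂ν with hr
  have hrm : Measurable r := hp.stronglyMeasurable.integral_prod_left'.measurable
  have hB : MeasurableSet {v | r v = 1} := hrm (measurableSet_singleton 1)
  set f : 𝓥 → 𝓔 → ENNReal := fun v e => if r v = 1 then ENNReal.ofReal (p (e, v)) else 0 with hf
  have hfm : Measurable (Function.uncurry f) := by
    refine Measurable.ite (measurable_fst hB) ?_ measurable_const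
    fun_prop
  have hint : ∀ v, r v = 1 → Integrable (fun e => p (e, v)) ν := by
    intro v hv
    by_contra h
    have := integral_undef h
    change r v = 0 at this
    linarith
  set κ : Kernel 𝓥 𝓔 := Kernel.withDensity (Kernel.const 𝓥 ν) f with hκ
  have hκa : ∀ v, r v = 1 → κ v = ν.withDensity (fun e => ENNReal.ofReal (p (e, v))) := by
    intro v hv
    rw [hκ, Kernel.withDensity_apply _ hfm]
    simp [hf, hv]
  have hle : ∀ v, κ v Set.univ ≤ 1 := by
    intro v
    by_cases hv : r v = 1
    · rw [hκa v hv, withDensity_apply _ .univ, Measure.restrict_univ,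
        ← ofReal_integral_eq_lintegral_ofReal (hint v hv) (.of_forall fun e => hp0 _)]
      change ENNReal.ofReal (r v) ≤ 1
      simp [hv]
    · rw [hκ, Kernel.withDensity_apply _ hfm]
      simp [hf, hv]
  have : IsFiniteKernel κ := ⟨⟨1, by simp, hle⟩⟩
  have main : P.map (fun ω => (V ω, ε ω)) = P.map V ⊗ₘ κ := by
    ext S hS
    rw [Measure.compProd_apply hS, lintegral_map (Kernel.measurable_kernel_prodMk_left hS) hV,
      Measure.map_apply (by fun_prop) hS]
    have hS' : MeasurableSet (Prod.swap ⁻¹' S : Set (𝓔 × 𝓥)) := measurable_swap hS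
    have h1 := hd ((Prod.swap ⁻¹' S).indicator 1) (measurable_one.indicator hS')
      ⟨1, fun x => by by_cases hx : x ∈ (Prod.swap ⁻¹' S : Set (𝓔 × 𝓥)) <;> simp [hx]⟩
    have h2 : ∫ ω, (Prod.swap ⁻¹' S : Set (𝓔 × 𝓥)).indicator (1 : 𝓔 × 𝓥 → ℝ) (ε ω, V ω) ∂P
        = P.real ((fun ω => (V ω, ε ω)) ⁻¹' S) := by
      rw [← integral_indicator_one ((by fun_prop : Measurable fun ω => (V ω, ε ω)) hS)]
      rfl
    have h3 : ∫ ω, (∫ e, (Prod.swap ⁻¹' S : Set (𝓔 × 𝓥)).indicator (1 : 𝓔 × 𝓥 → ℝ) (e, V ω)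
        * p (e, V ω) ∂ν) ∂P = ∫ ω, (κ (V ω) (Prod.mk (V ω) ⁻¹' S)).toReal ∂P := by
      refine integral_congr_ae ?_
      filter_upwards [hm] with ω hω
      have hT : MeasurableSet (Prod.mk (V ω) ⁻¹' S : Set 𝓔) := measurable_prodMk_left hS
      rw [hκa _ hω, withDensity_apply _ hT,
        ← ofReal_integral_eq_lintegral_ofReal (hint _ hω).integrableOn (.of_forall fun e => hp0 _),
        ENNReal.toReal_ofReal (integral_nonneg fun e => hp0 _), ← integral_indicator hT]
      congr 1
      ext e
      by_cases he : (V ω, e) ∈ S <;> simp [he, Set.indicator]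
    have hmk : Measurable (fun ω => κ (V ω) (Prod.mk (V ω) ⁻¹' S)) :=
      (Kernel.measurable_kernel_prodMk_left hS).comp hV
    rw [h2, h3, integral_toReal hmk.aemeasurable
      (.of_forall fun ω => measure_lt_top _ _)] at h1
    refine (ENNReal.toReal_eq_toReal_iff' (measure_ne_top _ _) ?_).1 h1
    refine ((lintegral_mono fun ω => (measure_mono (Set.subset_univ _)).trans (hle (V ω))).trans_lt
      ?_).ne
    simp
  have hc := condDistrib_ae_eq_of_measure_eq_compProd V hε.aemeasurable main
  have hm' : ∀ᵐ v ∂(P.map V), r v = 1 := (ae_map_iff hV.aemeasurable hB).2 hm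
  filter_upwards [hc, hm'] with v h1 h2
  rw [h1, hκa v h2]

lemma icc_int {𝓔 : Type*} [MeasurableSpace 𝓔] (ν : Measure 𝓔) (q : 𝓔 → ℝ) (hq : Measurable q)
    (hq0 : ∀ e, 0 ≤ q e) (h : 𝓔 → ℝ) :
    ∫ e, h e ∂(ν.withDensity fun e => ENNReal.ofReal (q e)) = ∫ e, h e * q e ∂ν := by
  rw [integral_withDensity_eq_integral_toReal_smul (by fun_prop) (by simp)]
  refine integral_congr_ae (.of_forall fun e => ?_)
  simp [ENNReal.toReal_ofReal (hq0 e), mul_comm]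

/-- **Lemma 5, regression part (ICC paper).** With observed confounders
`(η, U)`, if `A ⫫ ε | (η, U)` and `p` is a conditional density of `ε` given
`(η, U)` w.r.t. `ν`, then with `k(a, v, u) := ∫ g(a, u, e) p(e, v, u) dν(e)`:
(a) `E[Y | A, η, U] = k(A, η, U)` a.s.; and
(b) `E[∫ k(a, η, U) π(a) dμ_A(a)] = J := E[∫ g(a, U, ε) π(a) dμ_A(a)]`. -/
theorem icc_lemma5_reg_observed_confounders
    {Ω 𝓐 𝓤 𝓔 : Type*}
    [MeasurableSpace Ω] [StandardBorelSpace Ω] [Nonempty Ω]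
    [MeasurableSpace 𝓐] [StandardBorelSpace 𝓐]
    [MeasurableSpace 𝓤] [StandardBorelSpace 𝓤]
    [MeasurableSpace 𝓔] [StandardBorelSpace 𝓔]
    (P : Measure Ω) [IsProbabilityMeasure P]
    (μA : Measure 𝓐) [SigmaFinite μA] (ν : Measure 𝓔) [SigmaFinite ν]
    (A : Ω → 𝓐) (U : Ω → 𝓤) (ε : Ω → 𝓔) (η : Ω → ℝ)
    (hA : Measurable A) (hU : Measurable U) (hε : Measurable ε) (hη : Measurable η)
    (g : 𝓐 × 𝓤 × 𝓔 → ℝ) (π : 𝓐 → ℝ) (hg : Measurable g) (hπ : Measurable π)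
    -- A ⫫ ε | (η, U)
    (hindep : CondIndepFun
      (MeasurableSpace.comap (fun ω => (η ω, U ω)) inferInstance)
      (Measurable.comap_le (by fun_prop)) A ε P)
    (p : 𝓔 × ℝ × 𝓤 → ℝ) (hp : Measurable p) (hp_nonneg : ∀ x, 0 ≤ p x)
    -- p is a conditional density of ε given (η, U) w.r.t. ν
    (hp_density : ∀ ψ : 𝓔 × ℝ × 𝓤 → ℝ, Measurable ψ → (∃ C, ∀ x, |ψ x| ≤ C) →
      ∫ ω, ψ (ε ω, η ω, U ω) ∂P
        = ∫ ω, (∫ e, ψ (e, η ω, U ω) * p (e, η ω, U ω) ∂ν) ∂P)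
    -- k(a, v, u) := ∫ g(a, u, e) p(e, v, u) dν(e)
    (k : 𝓐 × ℝ × 𝓤 → ℝ) (hk : Measurable k)
    (hk_def : ∀ a v u, k (a, v, u) = ∫ e, g (a, u, e) * p (e, v, u) ∂ν)
    -- all displayed integrands are integrable
    (hYInt : Integrable (fun ω => g (A ω, U ω, ε ω)) P)
    (hk_int : ∀ a v u, Integrable (fun e => g (a, u, e) * p (e, v, u)) ν)
    (hkInt : Integrable (fun p : 𝓐 × Ω => k (p.1, η p.2, U p.2) * π p.1) (μA.prod P))
    (hJInt : Integrable (fun p : 𝓐 × Ω => g (p.1, U p.2, ε p.2) * π p.1) (μA.prod P)) :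
    -- (a) E[Y | A, η, U] = k(A, η, U) a.s.
    (P[(fun ω => g (A ω, U ω, ε ω)) |
        MeasurableSpace.comap (fun ω => (A ω, η ω, U ω)) inferInstance]
      =ᵐ[P] fun ω => k (A ω, η ω, U ω))
    -- (b) the regression identity
    ∧ ∫ ω, (∫ a, k (a, η ω, U ω) * π a ∂μA) ∂P
        = ∫ ω, (∫ a, g (a, U ω, ε ω) * π a ∂μA) ∂P := by
  have : Nonempty 𝓔 := ‹Nonempty Ω›.map ε
  have : Nonempty 𝓐 := ‹Nonempty Ω›.map A
  have hVm : Measurable (fun ω => (η ω, U ω)) := by fun_prop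
  have hc := icc_condDistrib P ν (fun ω => (η ω, U ω)) ε hVm hε p hp hp_nonneg hp_density
  have hcω := ae_of_ae_map hVm.aemeasurable hc
  have hkey : ∀ᵐ ω ∂P, ∀ a, ∫ e, g (a, U ω, e) ∂(condDistrib ε (fun ω => (η ω, U ω)) P (η ω, U ω))
      = k (a, η ω, U ω) := by
    filter_upwards [hcω] with ω hω a
    rw [hω, icc_int ν _ (by fun_prop) (fun e => hp_nonneg _), hk_def]
  constructor
  · have hci := (condIndepFun_iff_condDistrib_prod_ae_eq_prodMkRight hε hA hVm).1 hindep
    have hXm : Measurable (fun ω => ((η ω, U ω), A ω)) := by fun_prop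
    have hciω := ae_of_ae_map hXm.aemeasurable hci
    have hσ : MeasurableSpace.comap (fun ω => (A ω, η ω, U ω)) inferInstance
        = MeasurableSpace.comap (fun ω => ((η ω, U ω), A ω)) inferInstance := by
      have := (MeasurableEquiv.prodComm (α := 𝓐) (β := ℝ × 𝓤)).measurableEmbedding.comap_eq
      rw [← this, MeasurableSpace.comap_comp]
      rfl
    rw [hσ]
    have hce := condExp_prod_ae_eq_integral_condDistrib (μ := P) hXm hε.aemeasurable
      (f := fun x : ((ℝ × 𝓤) × 𝓐) × 𝓔 => g (x.1.2, x.1.1.2, x.2))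
      (Measurable.stronglyMeasurable (by fun_prop)) hYInt
    refine hce.trans ?_
    filter_upwards [hciω, hkey] with ω h1 h2
    rw [h1]
    exact h2 (A ω)
  · rw [integral_integral_swap (f := fun ω a => k (a, η ω, U ω) * π a) hkInt.swap,
      integral_integral_swap (f := fun ω a => g (a, U ω, ε ω) * π a) hJInt.swap]
    refine integral_congr_ae ?_
    filter_upwards [hJInt.prod_right_ae] with a ha
    have hce := condExp_prod_ae_eq_integral_condDistrib (μ := P) hVm hε.aemeasurable
      (f := fun x : (ℝ × 𝓤) × 𝓔 => g (a, x.1.2, x.2) * π a)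
      (Measurable.stronglyMeasurable (by fun_prop)) ha
    rw [← integral_condExp hVm.comap_le (f := fun ω => g (a, U ω, ε ω) * π a)]
    refine integral_congr_ae ?_
    filter_upwards [hce, hkey] with ω h1 h2
    rw [h1, integral_mul_const, h2]
end

section
/- Fix a ∈ ℝ and write P(A ≤ a | ·) := E[1_{A ≤ a} | ·]. Suppose A and W₀ are conditionally independent given (Z, U), and τ : 𝓩 × 𝓦₁ → ℝ is measurable with τ(Z, W₁) integrable, satisfying the structural control-bridge condition E[τ(Z, W₁) | Z, U, W₀] = P(A ≤ a | Z, U) almost surely. Then the observable moment restriction holds: E[τ(Z, W₁) | Z, W₀] = P(A ≤ a | Z, W₀) almost surely. -/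
open MeasureTheory ProbabilityTheory

lemma icc_aux {Ω K W : Type*} {mΩ : MeasurableSpace Ω} [StandardBorelSpace Ω]
    [MeasurableSpace K] [MeasurableSpace W]
    (P : Measure Ω) [IsProbabilityMeasure P] (k : Ω → K) (w : Ω → W) (A : Ω → ℝ)
    (hk : Measurable k) (hw : Measurable w) (hA : Measurable A)
    (h : CondIndepFun (MeasurableSpace.comap k inferInstance) hk.comap_le A w P)
    (s : Set ℝ) (hs : MeasurableSet s) :
    P[((A ⁻¹' s).indicator fun _ => (1 : ℝ)) | MeasurableSpace.comap k inferInstance] =ᵐ[P]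
    P[((A ⁻¹' s).indicator fun _ => (1 : ℝ)) |
      MeasurableSpace.comap (fun ω => (k ω, w ω)) inferInstance] := by
  rw [condIndepFun_iff_condExp_inter_preimage_eq_mul hA hw] at h
  have hkw : Measurable (fun ω => (k ω, w ω)) := hk.prodMk hw
  have hint : Integrable ((A ⁻¹' s).indicator fun _ => (1 : ℝ)) P :=
    (integrable_const _).indicator (hA hs)
  set g := P[((A ⁻¹' s).indicator fun _ => (1 : ℝ)) | MeasurableSpace.comap k inferInstance]
    with hg
  have hgi : Integrable g P := integrable_condExp
  have key : ∀ v : Set (K × W), MeasurableSet v →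
      ∫ x in (fun ω => (k ω, w ω)) ⁻¹' v, g x ∂P =
      ∫ x in (fun ω => (k ω, w ω)) ⁻¹' v, (A ⁻¹' s).indicator (fun _ => (1 : ℝ)) x ∂P := by
    intro v hv
    induction v, hv using MeasurableSpace.induction_on_inter generateFrom_prod.symm
      isPiSystem_prod with
    | empty => simp
    | basic v hv =>
      obtain ⟨b, hb, t, ht, rfl⟩ := hv
      have hb : MeasurableSet b := hb
      have ht : MeasurableSet t := ht
      have hti : Integrable ((w ⁻¹' t).indicator fun _ => (1 : ℝ)) P :=
        (integrable_const _).indicator (hw ht)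
      have hmulE : g * ((w ⁻¹' t).indicator fun _ => (1 : ℝ)) = (w ⁻¹' t).indicator g := by
        ext x; by_cases hx : x ∈ w ⁻¹' t <;> simp [hx]
      have hgt : Integrable (g * ((w ⁻¹' t).indicator fun _ => (1 : ℝ))) P := by
        rw [hmulE]; exact hgi.indicator (hw ht)
      have hpull := condExp_mul_of_stronglyMeasurable_left (μ := P)
        (m := MeasurableSpace.comap k inferInstance) stronglyMeasurable_condExp hgt hti
      have hsti : Integrable ((A ⁻¹' s ∩ w ⁻¹' t).indicator fun _ => (1 : ℝ)) P :=
        (integrable_const _).indicator ((hA hs).inter (hw ht))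
      have hkb : MeasurableSet[MeasurableSpace.comap k inferInstance] (k ⁻¹' b) := ⟨b, hb, rfl⟩
      have hE : (fun ω => (k ω, w ω)) ⁻¹' (b ×ˢ t) = k ⁻¹' b ∩ w ⁻¹' t := rfl
      rw [hE, ← setIntegral_indicator (hw ht), ← setIntegral_indicator (hw ht),
        ← hmulE, ← setIntegral_condExp hk.comap_le hgt hkb, Set.indicator_indicator,
        Set.inter_comm (w ⁻¹' t), ← setIntegral_condExp hk.comap_le hsti hkb]
      refine integral_congr_ae (ae_restrict_of_ae ?_)
      exact hpull.trans (h s t hs ht).symm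
    | compl v hv ih =>
      rw [Set.preimage_compl, setIntegral_compl (hkw hv) hgi, setIntegral_compl (hkw hv) hint, ih,
        hg, integral_condExp hk.comap_le]
    | iUnion f hd hm ih =>
      have hd' : Pairwise (Function.onFun Disjoint fun i => (fun ω => (k ω, w ω)) ⁻¹' f i) :=
        fun i j hij => (hd hij).preimage _
      rw [Set.preimage_iUnion, integral_iUnion (fun i => hkw (hm i)) hd' hgi.integrableOn,
        integral_iUnion (fun i => hkw (hm i)) hd' hint.integrableOn]
      exact tsum_congr ih
  refine ae_eq_condExp_of_forall_setIntegral_eq hkw.comap_le hint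
    (fun _ _ _ => hgi.integrableOn) ?_ ?_
  · rintro _ ⟨v, hv, rfl⟩ _
    exact key v hv
  · have hle : MeasurableSpace.comap k inferInstance ≤
        MeasurableSpace.comap (fun ω => (k ω, w ω)) inferInstance := by
      rintro _ ⟨b, hb, rfl⟩
      exact ⟨Prod.fst ⁻¹' b, measurable_fst hb, rfl⟩
    exact (stronglyMeasurable_condExp.mono hle).aestronglyMeasurable


/-- **Lemma 7, equation (1) (ICC paper).** Fix `a ∈ ℝ`. If `A ⫫ W₀ | (Z, U)`
and `τ` satisfies the structural control-bridge condition
`E[τ(Z, W₁) | Z, U, W₀] = P(A ≤ a | Z, U)` a.s., then the observable moment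
restriction `E[τ(Z, W₁) | Z, W₀] = P(A ≤ a | Z, W₀)` holds a.s. -/
theorem icc_lemma7_control_bridge_obs
    {Ω 𝓩 𝓤 𝓦₀ 𝓦₁ : Type*}
    [MeasurableSpace Ω] [StandardBorelSpace Ω] [Nonempty Ω]
    [MeasurableSpace 𝓩] [MeasurableSpace 𝓤] [MeasurableSpace 𝓦₀] [MeasurableSpace 𝓦₁]
    (P : Measure Ω) [IsProbabilityMeasure P]
    (Z : Ω → 𝓩) (U : Ω → 𝓤) (W₀ : Ω → 𝓦₀) (W₁ : Ω → 𝓦₁) (A : Ω → ℝ)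
    (hZ : Measurable Z) (hU : Measurable U) (hW₀ : Measurable W₀)
    (hW₁ : Measurable W₁) (hA : Measurable A)
    (a : ℝ)
    -- A ⫫ W₀ | (Z, U)
    (hindep : CondIndepFun
      (MeasurableSpace.comap (fun ω => (Z ω, U ω)) inferInstance)
      (Measurable.comap_le (by fun_prop)) A W₀ P)
    (τ : 𝓩 × 𝓦₁ → ℝ) (hτ : Measurable τ)
    (hτInt : Integrable (fun ω => τ (Z ω, W₁ ω)) P)
    -- structural control-bridge condition:
    -- E[τ(Z, W₁) | Z, U, W₀] = P(A ≤ a | Z, U) a.s.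
    (hbridge : P[(fun ω => τ (Z ω, W₁ ω)) |
        MeasurableSpace.comap (fun ω => (Z ω, U ω, W₀ ω)) inferInstance]
      =ᵐ[P] P[(Set.indicator {ω | A ω ≤ a} fun _ => (1 : ℝ)) |
        MeasurableSpace.comap (fun ω => (Z ω, U ω)) inferInstance]) :
    -- observable moment restriction: E[τ(Z, W₁) | Z, W₀] = P(A ≤ a | Z, W₀) a.s.
    P[(fun ω => τ (Z ω, W₁ ω)) |
        MeasurableSpace.comap (fun ω => (Z ω, W₀ ω)) inferInstance]
      =ᵐ[P] P[(Set.indicator {ω | A ω ≤ a} fun _ => (1 : ℝ)) |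
        MeasurableSpace.comap (fun ω => (Z ω, W₀ ω)) inferInstance] := by
  have h1 := icc_aux P (fun ω => (Z ω, U ω)) W₀ A (hZ.prodMk hU) hW₀ hA hindep
    (Set.Iic a) measurableSet_Iic
  have hcm : MeasurableSpace.comap (fun ω => ((Z ω, U ω), W₀ ω)) inferInstance =
      MeasurableSpace.comap (fun ω => (Z ω, U ω, W₀ ω)) inferInstance := by
    apply le_antisymm
    · rintro _ ⟨v, hv, rfl⟩
      exact ⟨(fun p : 𝓩 × 𝓤 × 𝓦₀ => ((p.1, p.2.1), p.2.2)) ⁻¹' v,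
        (by fun_prop : Measurable (fun p : 𝓩 × 𝓤 × 𝓦₀ => ((p.1, p.2.1), p.2.2))) hv, rfl⟩
    · rintro _ ⟨v, hv, rfl⟩
      exact ⟨(fun p : (𝓩 × 𝓤) × 𝓦₀ => (p.1.1, p.1.2, p.2)) ⁻¹' v,
        (by fun_prop : Measurable (fun p : (𝓩 × 𝓤) × 𝓦₀ => (p.1.1, p.1.2, p.2))) hv, rfl⟩
  rw [hcm] at h1
  have hle : MeasurableSpace.comap (fun ω => (Z ω, W₀ ω)) inferInstance ≤
      MeasurableSpace.comap (fun ω => (Z ω, U ω, W₀ ω)) inferInstance := by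
    rintro _ ⟨v, hv, rfl⟩
    exact ⟨(fun p : 𝓩 × 𝓤 × 𝓦₀ => (p.1, p.2.2)) ⁻¹' v,
      (by fun_prop : Measurable (fun p : 𝓩 × 𝓤 × 𝓦₀ => (p.1, p.2.2))) hv, rfl⟩
  have hM : MeasurableSpace.comap (fun ω => (Z ω, U ω, W₀ ω)) inferInstance ≤
      ‹MeasurableSpace Ω› := (hZ.prodMk (hU.prodMk hW₀)).comap_le
  have h2 := condExp_congr_ae (m := MeasurableSpace.comap (fun ω => (Z ω, W₀ ω)) inferInstance)
    (hbridge.trans h1)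
  exact ((condExp_condExp_of_le hle hM).symm.trans h2).trans (condExp_condExp_of_le hle hM)
end

section
/- Suppose: (i) Z and Y are conditionally independent given (A, Ṽ, U); (ii) ε and A are conditionally independent given (Ṽ, U); (iii) f : 𝓐 × ℝ × 𝓤 → ℝ is a nonnegative measurable conditional density of A given (Ṽ, U) with respect to μ_A, i.e. for every bounded measurable φ, E[φ(A, Ṽ, U)] = E[∫_𝓐 φ(a, Ṽ, U) f(a, Ṽ, U) dμ_A(a)], with f(A, Ṽ, U) > 0 almost surely and f(a, Ṽ(ω), U(ω)) > 0 for μ_A ⊗ ℙ-almost every (a, ω) with π(a) ≠ 0; (iv) q₀ : 𝓐 × ℝ × 𝓩 → ℝ is measurable and satisfies the structural action-bridge condition E[π(A) q₀(A, Ṽ, Z) | A, Ṽ, U] = π(A)/f(A, Ṽ, U) almost surely; (v) all displayed integrands are integrable. Then the IPW identity holds: E[Y · π(A) · q₀(A, Ṽ, Z)] = J := E[∫_𝓐 g(a, U, ε) π(a) dμ_A(a)]. -/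
open MeasureTheory ProbabilityTheory

lemma icc_aux_factor {Ω β β' γ : Type*} [MeasurableSpace Ω] [StandardBorelSpace Ω]
    [MeasurableSpace β] [StandardBorelSpace β] [Nonempty β]
    [MeasurableSpace β'] [StandardBorelSpace β'] [Nonempty β']
    [MeasurableSpace γ] (P : Measure Ω) [IsProbabilityMeasure P]
    (k : Ω → γ) (g : Ω → β') (f : Ω → β)
    (hk : Measurable k) (hg : Measurable g) (hf : Measurable f)
    (h : CondIndepFun (MeasurableSpace.comap k inferInstance) hk.comap_le g f P) :
    P.map (fun ω => ((k ω, g ω), f ω))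
      = (P.map (fun ω => (k ω, g ω))) ⊗ₘ ((condDistrib f k P).prodMkRight β') := by
  have h1 := (condIndepFun_iff_condDistrib_prod_ae_eq_prodMkRight hf hg hk).1 h
  exact (condDistrib_ae_eq_iff_measure_eq_compProd _ hf.aemeasurable _).1 h1

lemma icc_aux_density {Ω 𝓐 X : Type*} [MeasurableSpace Ω]
    [MeasurableSpace 𝓐] [MeasurableSpace X]
    (P : Measure Ω) [IsProbabilityMeasure P] (μA : Measure 𝓐) [SigmaFinite μA]
    (A : Ω → 𝓐) (V : Ω → X) (hA : Measurable A) (hV : Measurable V)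
    (f : 𝓐 × X → ℝ) (hf : Measurable f) (hf_nonneg : ∀ x, 0 ≤ f x)
    (hd : ∀ φ : 𝓐 × X → ℝ, Measurable φ → (∃ C, ∀ x, |φ x| ≤ C) →
      ∫ ω, φ (A ω, V ω) ∂P = ∫ ω, (∫ a, φ (a, V ω) * f (a, V ω) ∂μA) ∂P) :
    P.map (fun ω => (A ω, V ω))
      = ((μA.prod (P.map V)).withDensity (fun x => ENNReal.ofReal (f x))) := by
  have hAV : Measurable (fun ω => (A ω, V ω)) := by fun_prop
  have : IsProbabilityMeasure (P.map V) := Measure.isProbabilityMeasure_map hV.aemeasurable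
  set G : X → ENNReal := fun x => ∫⁻ a, ENNReal.ofReal (f (a, x)) ∂μA with hG
  have hGm : Measurable G := Measurable.lintegral_prod_left' (f := fun x => ENNReal.ofReal (f x)) (by fun_prop)
  have hm2 : ∀ S : Set (𝓐 × X), MeasurableSet S →
      ((μA.prod (P.map V)).withDensity (fun x => ENNReal.ofReal (f x))) S
        = ∫⁻ ω, ∫⁻ a, S.indicator (fun x => ENNReal.ofReal (f x)) (a, V ω) ∂μA ∂P := by
    intro S hS
    have hm : Measurable (S.indicator (fun x => ENNReal.ofReal (f x))) :=
      (hf.ennreal_ofReal).indicator hS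
    rw [withDensity_apply _ hS, ← lintegral_indicator hS, lintegral_prod_symm' _ hm,
      lintegral_map hm.lintegral_prod_left' hV]
  have hm1 : ∀ S : Set (𝓐 × X), MeasurableSet S →
      ((P.map (fun ω => (A ω, V ω))) S).toReal
        = ∫ ω, (∫⁻ a, S.indicator (fun x => ENNReal.ofReal (f x)) (a, V ω) ∂μA).toReal ∂P := by
    intro S hS
    have := hd (S.indicator (fun _ => 1)) (measurable_const.indicator hS)
      ⟨1, fun x => by by_cases hx : x ∈ S <;> simp [hx]⟩
    have e1 : ∫ ω, S.indicator (fun _ => (1:ℝ)) (A ω, V ω) ∂P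
        = ((P.map (fun ω => (A ω, V ω))) S).toReal := by
      rw [← integral_map (f := S.indicator (fun _ => (1:ℝ))) hAV.aemeasurable
        (measurable_const.indicator hS).aestronglyMeasurable, integral_indicator_const _ hS]
      simp [Measure.real]
    rw [← e1, this]
    refine integral_congr_ae (Filter.Eventually.of_forall fun ω => ?_)
    simp only
    rw [integral_eq_lintegral_of_nonneg_ae]
    · congr 1
      refine lintegral_congr fun a => ?_
      by_cases hx : (a, V ω) ∈ S <;> simp [hx]
    · refine Filter.Eventually.of_forall fun a => ?_
      by_cases hx : (a, V ω) ∈ S <;> simp [hx, hf_nonneg]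
    · refine Measurable.aestronglyMeasurable ?_
      have : Measurable (S.indicator (fun _ => (1:ℝ))) := measurable_const.indicator hS
      fun_prop
  -- pieces
  let T : Option ℕ → Set (𝓐 × X) := fun o => match o with
    | none => {x | G x.2 = ⊤}
    | some n => {x | G x.2 ≤ n}
  have hT : ∀ o, MeasurableSet (T o) := by
    intro o
    cases o with
    | none => exact (hGm.comp measurable_snd) (measurableSet_singleton ⊤)
    | some n => exact measurableSet_le (hGm.comp measurable_snd) measurable_const
  refine Measure.ext_of_iUnion_eq_univ (s := T) ?_ ?_
  · refine Set.eq_univ_of_forall fun x => Set.mem_iUnion.2 ?_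
    by_cases hx : G x.2 = ⊤
    · exact ⟨none, hx⟩
    · obtain ⟨n, hn⟩ := ENNReal.exists_nat_gt hx
      exact ⟨some n, hn.le⟩
  intro o
  cases o with
  | none =>
    have hz : P.map (fun ω => (A ω, V ω)) (T none) = 0 := by
      have h0 := hm1 _ (hT none)
      have : ∀ ω, (∫⁻ a, (T none).indicator (fun x => ENNReal.ofReal (f x)) (a, V ω) ∂μA).toReal = 0 := by
        intro ω
        by_cases hx : G (V ω) = ⊤
        · have : ∀ a, (T none).indicator (fun x => ENNReal.ofReal (f x)) (a, V ω) = ENNReal.ofReal (f (a, V ω)) :=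
            fun a => Set.indicator_of_mem (show (a, V ω) ∈ T none from hx) _
          simp only [this]
          change (G (V ω)).toReal = 0
          simp [hx]
        · have : ∀ a, (T none).indicator (fun x => ENNReal.ofReal (f x)) (a, V ω) = 0 :=
            fun a => Set.indicator_of_notMem (show ¬ (a, V ω) ∈ T none from hx) _
          simp only [this]; simp
      simp only [this, integral_zero] at h0
      exact (ENNReal.toReal_eq_zero_iff _).1 h0 |>.resolve_right (by
        rw [Measure.map_apply hAV (hT none)]; exact measure_ne_top _ _)
    have hz' : P.map V {x | G x = ⊤} = 0 := by
      rw [Measure.map_apply hAV (hT none)] at hz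
      exact (Measure.map_apply hV (hGm (measurableSet_singleton ⊤))).trans hz
    have hz2 : ((μA.prod (P.map V)).withDensity (fun x => ENNReal.ofReal (f x))) (T none) = 0 := by
      refine (withDensity_absolutelyContinuous _ _) ?_
      have : T none = Set.univ ×ˢ {x | G x = ⊤} := by ext x; simp [T]
      rw [this, Measure.prod_prod, hz', mul_zero]
    rw [Measure.restrict_eq_zero.2 hz, Measure.restrict_eq_zero.2 hz2]
  | some n =>
    ext S hS
    rw [Measure.restrict_apply hS, Measure.restrict_apply hS]
    have hST := hS.inter (hT (some n))
    have h1 := hm1 _ hST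
    have hm : Measurable ((S ∩ T (some n)).indicator (fun x => ENNReal.ofReal (f x))) :=
      (hf.ennreal_ofReal).indicator hST
    have hle : ∀ ω, ∫⁻ a, (S ∩ T (some n)).indicator (fun x => ENNReal.ofReal (f x)) (a, V ω) ∂μA ≤ n := by
      intro ω
      by_cases hx : G (V ω) ≤ n
      · refine le_trans (lintegral_mono fun a => ?_) hx
        exact Set.indicator_le_self _ _ _
      · have : ∀ a, (S ∩ T (some n)).indicator (fun x => ENNReal.ofReal (f x)) (a, V ω) = 0 :=
          fun a => Set.indicator_of_notMem (fun h => hx h.2) _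
        simp only [this]; simp
    have hmV : Measurable (fun ω => ∫⁻ a, (S ∩ T (some n)).indicator
        (fun x => ENNReal.ofReal (f x)) (a, V ω) ∂μA) := hm.lintegral_prod_left'.comp hV
    rw [integral_toReal hmV.aemeasurable
      (Filter.Eventually.of_forall fun ω => (hle ω).trans_lt (ENNReal.natCast_lt_top n)), ← hm2 _ hST] at h1
    refine (ENNReal.toReal_eq_toReal_iff' ?_ ?_).1 h1
    · rw [Measure.map_apply hAV hST]; exact measure_ne_top _ _
    · rw [hm2 _ hST]
      refine ne_top_of_le_ne_top (b := (n : ENNReal)) (ENNReal.natCast_ne_top n) ?_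
      exact (lintegral_mono hle).trans (by simp)

lemma icc_aux_density2 {Ω 𝓐 X 𝓔 : Type*} [MeasurableSpace Ω] [StandardBorelSpace Ω]
    [MeasurableSpace 𝓐] [StandardBorelSpace 𝓐] [Nonempty 𝓐] [MeasurableSpace X]
    [MeasurableSpace 𝓔] [StandardBorelSpace 𝓔] [Nonempty 𝓔]
    (P : Measure Ω) [IsProbabilityMeasure P] (μA : Measure 𝓐) [SigmaFinite μA]
    (A : Ω → 𝓐) (V : Ω → X) (ε : Ω → 𝓔)
    (hA : Measurable A) (hV : Measurable V) (hε : Measurable ε)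
    (h : CondIndepFun (MeasurableSpace.comap V inferInstance) hV.comap_le ε A P)
    (f : 𝓐 × X → ℝ) (hf : Measurable f) (hf_nonneg : ∀ x, 0 ≤ f x)
    (hd : ∀ φ : 𝓐 × X → ℝ, Measurable φ → (∃ C, ∀ x, |φ x| ≤ C) →
      ∫ ω, φ (A ω, V ω) ∂P = ∫ ω, (∫ a, φ (a, V ω) * f (a, V ω) ∂μA) ∂P) :
    P.map (fun ω => (A ω, V ω, ε ω))
      = ((μA.prod P).withDensity (fun x => ENNReal.ofReal (f (x.1, V x.2)))).map
          (fun x => (x.1, V x.2, ε x.2)) := by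
  have hlaw := icc_aux_density P μA A V hA hV f hf hf_nonneg hd
  have hfac := icc_aux_factor P V A ε hV hA hε h.symm
  have hVε : (P.map V) ⊗ₘ (condDistrib ε V P) = P.map (fun ω => (V ω, ε ω)) :=
    compProd_map_condDistrib hε.aemeasurable
  set κ := condDistrib ε V P
  have hfV : Measurable (fun x : 𝓐 × Ω => ENNReal.ofReal (f (x.1, V x.2))) := by fun_prop
  refine Measure.ext_of_lintegral _ fun F hF => ?_
  rw [lintegral_map hF (by fun_prop), lintegral_map hF (by fun_prop),
    lintegral_withDensity_eq_lintegral_mul _ hfV (by fun_prop)]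
  have hI : Measurable (fun y : 𝓐 × X => ∫⁻ e, F (y.1, y.2, e) ∂(κ y.2)) := by
    have : Measurable (fun z : (𝓐 × X) × 𝓔 => F (z.1.1, z.1.2, z.2)) := by fun_prop
    exact this.lintegral_kernel_prod_right' (κ := κ.comap Prod.snd measurable_snd)
  have hH : Measurable (fun y : X × 𝓔 =>
      ∫⁻ a, ENNReal.ofReal (f (a, y.1)) * F (a, y.1, y.2) ∂μA) := by
    have : Measurable (fun z : 𝓐 × (X × 𝓔) =>
      ENNReal.ofReal (f (z.1, z.2.1)) * F (z.1, z.2.1, z.2.2)) := by fun_prop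
    exact this.lintegral_prod_left'
  calc ∫⁻ ω, F (A ω, V ω, ε ω) ∂P
      = ∫⁻ z, F (z.1.2, z.1.1, z.2) ∂(P.map (fun ω => ((V ω, A ω), ε ω))) := by
        rw [lintegral_map (by fun_prop) (by fun_prop)]
    _ = ∫⁻ ω, ∫⁻ e, F (A ω, V ω, e) ∂(κ (V ω)) ∂P := by
        rw [hfac, Measure.lintegral_compProd (by fun_prop)]
        rw [lintegral_map _ (by fun_prop)]
        · simp [Kernel.prodMkRight_apply]
        · simp only [Kernel.prodMkRight_apply]
          exact hI.comp measurable_swap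
    _ = ∫⁻ y, (∫⁻ e, F (y.1, y.2, e) ∂(κ y.2)) ∂(P.map (fun ω => (A ω, V ω))) := by
        rw [lintegral_map hI (by fun_prop)]
    _ = ∫⁻ ω, ∫⁻ a, ENNReal.ofReal (f (a, V ω)) * ∫⁻ e, F (a, V ω, e) ∂(κ (V ω)) ∂μA ∂P := by
        have : IsProbabilityMeasure (P.map V) := Measure.isProbabilityMeasure_map hV.aemeasurable
        have hm : Measurable (fun y : 𝓐 × X =>
          ENNReal.ofReal (f y) * ∫⁻ e, F (y.1, y.2, e) ∂(κ y.2)) := hf.ennreal_ofReal.mul hI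
        rw [hlaw, lintegral_withDensity_eq_lintegral_mul _ hf.ennreal_ofReal hI]
        simp only [Pi.mul_apply]
        rw [lintegral_prod_symm' _ hm, lintegral_map hm.lintegral_prod_left' hV]
    _ = ∫⁻ ω, ∫⁻ e, ∫⁻ a, ENNReal.ofReal (f (a, V ω)) * F (a, V ω, e) ∂μA ∂(κ (V ω)) ∂P := by
        refine lintegral_congr fun ω => ?_
        rw [lintegral_lintegral_swap (Measurable.aemeasurable (by unfold Function.uncurry; fun_prop))]
        refine lintegral_congr fun a => ?_
        rw [lintegral_const_mul _ (by fun_prop)]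
    _ = ∫⁻ y, (∫⁻ a, ENNReal.ofReal (f (a, y.1)) * F (a, y.1, y.2) ∂μA)
          ∂(P.map (fun ω => (V ω, ε ω))) := by
        rw [← hVε, Measure.lintegral_compProd hH, lintegral_map hH.lintegral_kernel_prod_right' hV]
    _ = ∫⁻ ω, ∫⁻ a, ENNReal.ofReal (f (a, V ω)) * F (a, V ω, ε ω) ∂μA ∂P := by
        rw [lintegral_map hH (by fun_prop)]
    _ = _ := by
        rw [lintegral_prod_symm' _ (by fun_prop)]
        rfl

/-- integrating `Y` out against its conditional distribution given `W`. -/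
lemma icc_aux_step1 {Ω W 𝓩 : Type*} [MeasurableSpace Ω] [StandardBorelSpace Ω]
    [MeasurableSpace W] [MeasurableSpace 𝓩] [StandardBorelSpace 𝓩] [Nonempty 𝓩]
    (P : Measure Ω) [IsProbabilityMeasure P]
    (k : Ω → W) (Z : Ω → 𝓩) (Y : Ω → ℝ)
    (hk : Measurable k) (hZ : Measurable Z) (hY : Measurable Y)
    (h : CondIndepFun (MeasurableSpace.comap k inferInstance) hk.comap_le Z Y P)
    (q : W × 𝓩 → ℝ) (hq : Measurable q) (r : W → ℝ) (hr : Measurable r)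
    (hb : P[(fun ω => q (k ω, Z ω)) | MeasurableSpace.comap k inferInstance]
      =ᵐ[P] fun ω => r (k ω))
    (hq1 : Integrable (fun ω => Y ω * q (k ω, Z ω)) P)
    (hq2 : Integrable (fun ω => q (k ω, Z ω)) P)
    (hr1 : Integrable (fun ω => Y ω * r (k ω)) P) :
    ∫ ω, Y ω * q (k ω, Z ω) ∂P = ∫ ω, Y ω * r (k ω) ∂P := by
  have hfac := icc_aux_factor P k Z Y hk hZ hY h
  set κ := condDistrib Y k P
  set m : W → ℝ := fun w => ∫ y, y ∂(κ w) with hm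
  have hmm : StronglyMeasurable m :=
    StronglyMeasurable.integral_condDistrib (f := fun z : W × ℝ => z.2) measurable_snd.stronglyMeasurable
  have key : ∀ p : W × 𝓩 → ℝ, Measurable p → Integrable (fun ω => Y ω * p (k ω, Z ω)) P →
      Integrable (fun ω => m (k ω) * p (k ω, Z ω)) P ∧
      ∫ ω, Y ω * p (k ω, Z ω) ∂P = ∫ ω, m (k ω) * p (k ω, Z ω) ∂P := by
    intro p hp hi
    have hFm : Measurable (fun z : (W × 𝓩) × ℝ => z.2 * p z.1) := by fun_prop
    have hpm : AEStronglyMeasurable (fun z : W × 𝓩 => m z.1 * p z)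
        (P.map (fun ω => (k ω, Z ω))) :=
      ((hmm.measurable.comp measurable_fst).mul hp).aestronglyMeasurable
    have hi' : Integrable (fun z : (W × 𝓩) × ℝ => z.2 * p z.1)
        ((P.map (fun ω => (k ω, Z ω))) ⊗ₘ (κ.prodMkRight 𝓩)) := by
      rw [← hfac, integrable_map_measure hFm.aestronglyMeasurable (by fun_prop)]
      exact hi
    have e : ∀ z : W × 𝓩, ∫ y, y * p z ∂(κ.prodMkRight 𝓩 z) = m z.1 * p z := by
      intro z; rw [integral_mul_const, Kernel.prodMkRight_apply]
    constructor
    · have := Integrable.integral_compProd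
        (κ := Kernel.const Unit (P.map (fun ω => (k ω, Z ω))))
        (η := Kernel.prodMkLeft Unit (κ.prodMkRight 𝓩)) (a := ()) hi'
      simp only [Kernel.prodMkLeft_apply, Kernel.const_apply, e] at this
      rw [integrable_map_measure hpm (by fun_prop)] at this
      exact this
    · have := Measure.integral_compProd hi'
      simp only [e] at this
      rw [← hfac, integral_map (by fun_prop) hFm.aestronglyMeasurable, integral_map (by fun_prop) hpm] at this
      exact this
  obtain ⟨i1, e1⟩ := key q hq hq1
  obtain ⟨i2, e2⟩ := key (fun z => r z.1) (by fun_prop) hr1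
  rw [e1, e2]
  have hle : MeasurableSpace.comap k inferInstance ≤ (inferInstance : MeasurableSpace Ω) := hk.comap_le
  have hms : StronglyMeasurable[MeasurableSpace.comap k inferInstance] (fun ω => m (k ω)) :=
    hmm.comp_measurable (comap_measurable k)
  have hpull := condExp_mul_of_stronglyMeasurable_left hms i1 hq2
  rw [← integral_condExp hle]
  refine integral_congr_ae ?_
  filter_upwards [hpull, hb] with ω h1 h2
  rw [← h2]
  exact h1

/-- **Lemma 9, IPW part (ICC paper).** If `Z ⫫ Y | (A, Ṽ, U)`,
`ε ⫫ A | (Ṽ, U)`, `f` is a positive conditional density of `A` given `(Ṽ, U)`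
w.r.t. `μ_A`, and `q₀` satisfies the structural action-bridge condition
`E[π(A) q₀(A,Ṽ,Z) | A, Ṽ, U] = π(A)/f(A,Ṽ,U)` a.s., then
`E[Y π(A) q₀(A,Ṽ,Z)] = J := E[∫ g(a, U, ε) π(a) dμ_A(a)]`. -/
theorem icc_lemma9_ipw_bridge
    {Ω 𝓐 𝓤 𝓩 𝓔 : Type*}
    [MeasurableSpace Ω] [StandardBorelSpace Ω] [Nonempty Ω]
    [MeasurableSpace 𝓐] [StandardBorelSpace 𝓐]
    [MeasurableSpace 𝓤] [StandardBorelSpace 𝓤]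
    [MeasurableSpace 𝓩] [StandardBorelSpace 𝓩]
    [MeasurableSpace 𝓔] [StandardBorelSpace 𝓔]
    (P : Measure Ω) [IsProbabilityMeasure P]
    (μA : Measure 𝓐) [SigmaFinite μA]
    (A : Ω → 𝓐) (U : Ω → 𝓤) (Z : Ω → 𝓩) (ε : Ω → 𝓔)
    (hA : Measurable A) (hU : Measurable U) (hZ : Measurable Z) (hε : Measurable ε)
    (g : 𝓐 × 𝓤 × 𝓔 → ℝ) (π : 𝓐 → ℝ) (hg : Measurable g) (hπ : Measurable π)
    (v : 𝓐 × 𝓩 → ℝ) (hv : Measurable v)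
    -- (i) Z ⫫ Y | (A, Ṽ, U), where Ṽ = v(A, Z) and Y = g(A, U, ε)
    (hZYindep : CondIndepFun
      (MeasurableSpace.comap (fun ω => (A ω, v (A ω, Z ω), U ω)) inferInstance)
      (Measurable.comap_le (by fun_prop))
      Z (fun ω => g (A ω, U ω, ε ω)) P)
    -- (ii) ε ⫫ A | (Ṽ, U)
    (hεAindep : CondIndepFun
      (MeasurableSpace.comap (fun ω => (v (A ω, Z ω), U ω)) inferInstance)
      (Measurable.comap_le (by fun_prop)) ε A P)
    -- (iii) f is a conditional density of A given (Ṽ, U) w.r.t. μ_A,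
    -- positive on the relevant support
    (f : 𝓐 × ℝ × 𝓤 → ℝ) (hf : Measurable f) (hf_nonneg : ∀ x, 0 ≤ f x)
    (hf_density : ∀ φ : 𝓐 × ℝ × 𝓤 → ℝ, Measurable φ → (∃ C, ∀ x, |φ x| ≤ C) →
      ∫ ω, φ (A ω, v (A ω, Z ω), U ω) ∂P
        = ∫ ω, (∫ a, φ (a, v (A ω, Z ω), U ω) * f (a, v (A ω, Z ω), U ω) ∂μA) ∂P)
    (hf_pos : ∀ᵐ ω ∂P, 0 < f (A ω, v (A ω, Z ω), U ω))
    (hf_pos' : ∀ᵐ x ∂(μA.prod P), π x.1 ≠ 0 → 0 < f (x.1, v (A x.2, Z x.2), U x.2))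
    -- (iv) structural action-bridge condition
    (q₀ : 𝓐 × ℝ × 𝓩 → ℝ) (hq₀ : Measurable q₀)
    (hbridge : P[(fun ω => π (A ω) * q₀ (A ω, v (A ω, Z ω), Z ω)) |
        MeasurableSpace.comap (fun ω => (A ω, v (A ω, Z ω), U ω)) inferInstance]
      =ᵐ[P] fun ω => π (A ω) / f (A ω, v (A ω, Z ω), U ω))
    -- (v) integrability of all displayed integrands
    (hIPWInt : Integrable (fun ω => g (A ω, U ω, ε ω) * π (A ω)
      * q₀ (A ω, v (A ω, Z ω), Z ω)) P)
    (hbridgeInt : Integrable (fun ω => π (A ω) * q₀ (A ω, v (A ω, Z ω), Z ω)) P)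
    (hratioInt : Integrable (fun ω => g (A ω, U ω, ε ω) * π (A ω)
      / f (A ω, v (A ω, Z ω), U ω)) P)
    (hJInt : Integrable (fun x : 𝓐 × Ω => g (x.1, U x.2, ε x.2) * π x.1) (μA.prod P)) :
    ∫ ω, g (A ω, U ω, ε ω) * π (A ω) * q₀ (A ω, v (A ω, Z ω), Z ω) ∂P
      = ∫ ω, (∫ a, g (a, U ω, ε ω) * π a ∂μA) ∂P := by
  obtain ⟨ω₀⟩ := ‹Nonempty Ω›
  have : Nonempty 𝓐 := ⟨A ω₀⟩
  have : Nonempty 𝓩 := ⟨Z ω₀⟩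
  have : Nonempty 𝓔 := ⟨ε ω₀⟩
  have s1 := icc_aux_step1 P (fun ω => (A ω, v (A ω, Z ω), U ω)) Z (fun ω => g (A ω, U ω, ε ω))
    (by fun_prop) hZ (by fun_prop) hZYindep
    (fun z => π z.1.1 * q₀ (z.1.1, z.1.2.1, z.2)) (by fun_prop)
    (fun w => π w.1 / f w) (by fun_prop) hbridge
    (by simpa only [mul_assoc] using hIPWInt) hbridgeInt
    (by simpa only [mul_div_assoc] using hratioInt)
  have s2 := icc_aux_density2 P μA A (fun ω => (v (A ω, Z ω), U ω)) ε hA (by fun_prop) hε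
    hεAindep f hf hf_nonneg hf_density
  have hFm : Measurable (fun y : 𝓐 × (ℝ × 𝓤) × 𝓔 =>
    g (y.1, y.2.1.2, y.2.2) * (π y.1 / f (y.1, y.2.1))) := by fun_prop
  have hfV : Measurable (fun x : 𝓐 × Ω =>
    ENNReal.ofReal (f (x.1, v (A x.2, Z x.2), U x.2))) := by fun_prop
  have s3 : ∫ ω, g (A ω, U ω, ε ω) * (π (A ω) / f (A ω, v (A ω, Z ω), U ω)) ∂P
      = ∫ x, g (x.1, U x.2, ε x.2) * π x.1 ∂(μA.prod P) := by
    have e1 := integral_map (μ := P) (φ := fun ω => (A ω, (v (A ω, Z ω), U ω), ε ω))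
      (by fun_prop) hFm.aestronglyMeasurable
    rw [← e1, s2, integral_map (by fun_prop) hFm.aestronglyMeasurable,
      integral_withDensity_eq_integral_toReal_smul hfV
        (Filter.Eventually.of_forall fun x => ENNReal.ofReal_lt_top)]
    refine integral_congr_ae ?_
    filter_upwards [hf_pos'] with x hx
    simp only [ENNReal.toReal_ofReal (hf_nonneg _), smul_eq_mul]
    by_cases h0 : π x.1 = 0
    · simp [h0]
    · have := (hx h0).ne'
      field_simp
  simp only [mul_assoc] at s1 ⊢
  rw [s1, s3, integral_prod_symm _ hJInt]
end

section
/- Suppose the pair (W, Y) is conditionally independent of Z given (A, U), and h₀ : 𝓐 × ℝ × 𝓦 → ℝ is measurable with h₀(A, Ṽ, W) integrable and satisfies the structural outcome-bridge condition E[Y − h₀(A, Ṽ, W) | A, Ṽ, U] = 0 almost surely. Then the observable moment restriction holds: E[Y − h₀(A, Ṽ, W) | A, Ṽ, Z] = 0 almost surely. -/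
open MeasureTheory ProbabilityTheory

/-- **Lemma 10, first equation (ICC paper).** If `(W, Y) ⫫ Z | (A, U)` and the
structural outcome-bridge condition `E[Y − h₀(A,Ṽ,W) | A, Ṽ, U] = 0` holds
a.s., then the observable moment restriction
`E[Y − h₀(A,Ṽ,W) | A, Ṽ, Z] = 0` holds a.s., with `Ṽ = v(A, Z)`. -/
theorem icc_lemma10_outcome_bridge_obs
    {Ω 𝓐 𝓤 𝓩 𝓦 : Type*}
    [MeasurableSpace Ω] [StandardBorelSpace Ω] [Nonempty Ω]
    [MeasurableSpace 𝓐] [StandardBorelSpace 𝓐]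
    [MeasurableSpace 𝓤] [StandardBorelSpace 𝓤]
    [MeasurableSpace 𝓩] [StandardBorelSpace 𝓩]
    [MeasurableSpace 𝓦] [StandardBorelSpace 𝓦]
    (P : Measure Ω) [IsProbabilityMeasure P]
    (A : Ω → 𝓐) (U : Ω → 𝓤) (Z : Ω → 𝓩) (W : Ω → 𝓦) (Y : Ω → ℝ)
    (hA : Measurable A) (hU : Measurable U) (hZ : Measurable Z) (hW : Measurable W)
    (hY : Measurable Y) (hYInt : Integrable Y P)
    (v : 𝓐 × 𝓩 → ℝ) (hv : Measurable v)
    -- (W, Y) ⫫ Z | (A, U)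
    (hindep : CondIndepFun
      (MeasurableSpace.comap (fun ω => (A ω, U ω)) inferInstance)
      (Measurable.comap_le (by fun_prop))
      (fun ω => (W ω, Y ω)) Z P)
    (h₀ : 𝓐 × ℝ × 𝓦 → ℝ) (hh₀ : Measurable h₀)
    (hh₀Int : Integrable (fun ω => h₀ (A ω, v (A ω, Z ω), W ω)) P)
    -- structural outcome-bridge condition: E[Y − h₀(A, Ṽ, W) | A, Ṽ, U] = 0 a.s.
    (hbridge : P[(fun ω => Y ω - h₀ (A ω, v (A ω, Z ω), W ω)) |
        MeasurableSpace.comap (fun ω => (A ω, v (A ω, Z ω), U ω)) inferInstance]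
      =ᵐ[P] 0) :
    -- observable moment restriction: E[Y − h₀(A, Ṽ, W) | A, Ṽ, Z] = 0 a.s.
    P[(fun ω => Y ω - h₀ (A ω, v (A ω, Z ω), W ω)) |
        MeasurableSpace.comap (fun ω => (A ω, v (A ω, Z ω), Z ω)) inferInstance]
      =ᵐ[P] 0 := by
  obtain ⟨ω₀⟩ := ‹Nonempty Ω›
  haveI : Nonempty 𝓦 := ⟨W ω₀⟩
  haveI : Nonempty 𝓩 := ⟨Z ω₀⟩
  have hk : Measurable (fun ω => (A ω, U ω)) := by fun_prop
  have hf : Measurable (fun ω => (W ω, Y ω)) := by fun_prop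
  have hkZ : Measurable (fun ω => ((A ω, U ω), Z ω)) := by fun_prop
  have hD : Integrable (fun ω => Y ω - h₀ (A ω, v (A ω, Z ω), W ω)) P := hYInt.sub hh₀Int
  have hm1 : Measurable (fun ω => (A ω, v (A ω, Z ω), U ω)) := by fun_prop
  have hm3 : Measurable (fun ω => (A ω, v (A ω, Z ω), Z ω)) := by fun_prop
  have h12 : MeasurableSpace.comap (fun ω => (A ω, v (A ω, Z ω), U ω)) inferInstance
      ≤ MeasurableSpace.comap (fun ω => ((A ω, U ω), Z ω)) inferInstance := by
    have hc : Measurable (fun p : (𝓐 × 𝓤) × 𝓩 => (p.1.1, v (p.1.1, p.2), p.1.2)) := by fun_prop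
    exact (hc.comp (comap_measurable (fun ω => ((A ω, U ω), Z ω)))).comap_le
  have h32 : MeasurableSpace.comap (fun ω => (A ω, v (A ω, Z ω), Z ω)) inferInstance
      ≤ MeasurableSpace.comap (fun ω => ((A ω, U ω), Z ω)) inferInstance := by
    have hc : Measurable (fun p : (𝓐 × 𝓤) × 𝓩 => (p.1.1, v (p.1.1, p.2), p.2)) := by fun_prop
    exact (hc.comp (comap_measurable (fun ω => ((A ω, U ω), Z ω)))).comap_le
  have hcd := (condIndepFun_iff_condDistrib_prod_ae_eq_prodMkRight hf hZ hk).1 hindep.symm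
  have hcd' := ae_of_ae_map hkZ.aemeasurable hcd
  -- the integral against the conditional law given `(A, U)`
  let κ : Kernel (𝓐 × ℝ × 𝓤) (𝓦 × ℝ) :=
    (condDistrib (fun ω => (W ω, Y ω)) (fun ω => (A ω, U ω)) P).comap
      (fun q => (q.1, q.2.2)) (by fun_prop)
  let G : 𝓐 × ℝ × 𝓤 → ℝ := fun q => ∫ p, (p.2 - h₀ (q.1, q.2.1, p.1)) ∂(κ q)
  have hG : StronglyMeasurable G := by
    have hm : Measurable (fun r : (𝓐 × ℝ × 𝓤) × (𝓦 × ℝ) =>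
        r.2.2 - h₀ (r.1.1, r.1.2.1, r.2.1)) := by fun_prop
    exact hm.stronglyMeasurable.integral_kernel_prod_right'
  have hφ : StronglyMeasurable (fun r : ((𝓐 × 𝓤) × 𝓩) × (𝓦 × ℝ) =>
        r.2.2 - h₀ (r.1.1.1, v (r.1.1.1, r.1.2), r.2.1)) := by
    have : Measurable (fun r : ((𝓐 × 𝓤) × 𝓩) × (𝓦 × ℝ) =>
        r.2.2 - h₀ (r.1.1.1, v (r.1.1.1, r.1.2), r.2.1)) := by fun_prop
    exact this.stronglyMeasurable
  have hce := condExp_prod_ae_eq_integral_condDistrib hkZ hf.aemeasurable hφ hD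
  have hceG : P[(fun ω => Y ω - h₀ (A ω, v (A ω, Z ω), W ω)) |
        MeasurableSpace.comap (fun ω => ((A ω, U ω), Z ω)) inferInstance]
      =ᵐ[P] fun ω => G (A ω, v (A ω, Z ω), U ω) := by
    filter_upwards [hce, hcd'] with ω h1 h2
    refine h1.trans ?_
    rw [h2]
    rfl
  have hGint : Integrable (fun ω => G (A ω, v (A ω, Z ω), U ω)) P :=
    (integrable_congr hceG).1 integrable_condExp
  have hGm : StronglyMeasurable[MeasurableSpace.comap (fun ω => (A ω, v (A ω, Z ω), U ω))
      inferInstance] (fun ω => G (A ω, v (A ω, Z ω), U ω)) :=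
    hG.comp_measurable (comap_measurable (fun ω => (A ω, v (A ω, Z ω), U ω)))
  have hG0 : (fun ω => G (A ω, v (A ω, Z ω), U ω)) =ᵐ[P] 0 := by
    have e1 := condExp_condExp_of_le (μ := P)
      (f := fun ω => Y ω - h₀ (A ω, v (A ω, Z ω), W ω)) h12 hkZ.comap_le
    have e2 := condExp_congr_ae (m := MeasurableSpace.comap
      (fun ω => (A ω, v (A ω, Z ω), U ω)) inferInstance) hceG
    rw [condExp_of_stronglyMeasurable hm1.comap_le hGm hGint] at e2
    exact e2.symm.trans (e1.trans hbridge)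
  have e1 := condExp_condExp_of_le (μ := P)
      (f := fun ω => Y ω - h₀ (A ω, v (A ω, Z ω), W ω)) h32 hkZ.comap_le
  have e2 := condExp_congr_ae (m := MeasurableSpace.comap
      (fun ω => (A ω, v (A ω, Z ω), Z ω)) inferInstance) (hceG.trans hG0)
  rw [condExp_zero] at e2
  exact e1.symm.trans e2
end

section
/- Suppose h₀ : 𝓐 × ℝ × 𝓦 → ℝ is measurable with h₀(A, Ṽ, W) integrable and satisfies the observable moment restriction E[Y − h₀(A, Ṽ, W) | A, Ṽ, Z] = 0 almost surely. Then for every measurable q : 𝓐 × ℝ × 𝓩 → ℝ such that (Y − h₀(A, Ṽ, W))·π(A)·q(A, Ṽ, Z) is integrable and (a, ω) ↦ h₀(a, Ṽ(ω), W(ω))π(a) is μ_A ⊗ ℙ-integrable, the doubly robust functional reduces to the regression functional: E[(Y − h₀(A, Ṽ, W))·π(A)·q(A, Ṽ, Z) + ∫_𝓐 h₀(a, Ṽ, W) π(a) dμ_A(a)] = E[∫_𝓐 h₀(a, Ṽ, W) π(a) dμ_A(a)]. -/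
open MeasureTheory ProbabilityTheory

/-- **Theorem 4, h-side double robustness (ICC paper).** If `h₀` satisfies the
observable moment restriction `E[Y − h₀(A,Ṽ,W) | A, Ṽ, Z] = 0` a.s., then for
every suitable weighting function `q` the doubly robust functional reduces to
the regression functional:
`E[(Y − h₀(A,Ṽ,W)) π(A) q(A,Ṽ,Z) + ∫ h₀(a,Ṽ,W) π(a) dμ_A(a)]
  = E[∫ h₀(a,Ṽ,W) π(a) dμ_A(a)]`. -/
theorem icc_theorem4_dr_h_side
    {Ω 𝓐 𝓩 𝓦 : Type*}
    [MeasurableSpace Ω] [StandardBorelSpace Ω] [Nonempty Ω]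
    [MeasurableSpace 𝓐] [StandardBorelSpace 𝓐]
    [MeasurableSpace 𝓩] [StandardBorelSpace 𝓩]
    [MeasurableSpace 𝓦] [StandardBorelSpace 𝓦]
    (P : Measure Ω) [IsProbabilityMeasure P]
    (μA : Measure 𝓐) [SigmaFinite μA]
    (A : Ω → 𝓐) (Z : Ω → 𝓩) (W : Ω → 𝓦) (Y : Ω → ℝ)
    (hA : Measurable A) (hZ : Measurable Z) (hW : Measurable W)
    (hY : Measurable Y) (hYInt : Integrable Y P)
    (π : 𝓐 → ℝ) (hπ : Measurable π)
    (v : 𝓐 × 𝓩 → ℝ) (hv : Measurable v)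
    (h₀ : 𝓐 × ℝ × 𝓦 → ℝ) (hh₀ : Measurable h₀)
    (hh₀Int : Integrable (fun ω => h₀ (A ω, v (A ω, Z ω), W ω)) P)
    -- observable moment restriction: E[Y − h₀(A, Ṽ, W) | A, Ṽ, Z] = 0 a.s.
    (hobs : P[(fun ω => Y ω - h₀ (A ω, v (A ω, Z ω), W ω)) |
        MeasurableSpace.comap (fun ω => (A ω, v (A ω, Z ω), Z ω)) inferInstance]
      =ᵐ[P] 0) :
    ∀ q : 𝓐 × ℝ × 𝓩 → ℝ, Measurable q →
      Integrable (fun ω => (Y ω - h₀ (A ω, v (A ω, Z ω), W ω)) * π (A ω)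
        * q (A ω, v (A ω, Z ω), Z ω)) P →
      Integrable (fun x : 𝓐 × Ω => h₀ (x.1, v (A x.2, Z x.2), W x.2) * π x.1)
        (μA.prod P) →
      ∫ ω, ((Y ω - h₀ (A ω, v (A ω, Z ω), W ω)) * π (A ω)
              * q (A ω, v (A ω, Z ω), Z ω)
            + ∫ a, h₀ (a, v (A ω, Z ω), W ω) * π a ∂μA) ∂P
        = ∫ ω, (∫ a, h₀ (a, v (A ω, Z ω), W ω) * π a ∂μA) ∂P := by
  intro q hq hI hI2
  have hT : Measurable (fun ω => (A ω, v (A ω, Z ω), Z ω)) := by fun_prop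
  have hm := hT.comap_le
  have hg : Measurable (fun x : 𝓐 × ℝ × 𝓩 => π x.1 * q x) := by fun_prop
  have hgT := (hg.comp (comap_measurable
    (fun ω => (A ω, v (A ω, Z ω), Z ω)))).stronglyMeasurable
  have hI' : Integrable ((fun ω => Y ω - h₀ (A ω, v (A ω, Z ω), W ω)) *
      ((fun x : 𝓐 × ℝ × 𝓩 => π x.1 * q x) ∘ (fun ω => (A ω, v (A ω, Z ω), Z ω)))) P := by
    refine hI.congr (Filter.Eventually.of_forall fun ω => ?_)
    simp [mul_assoc]
  have hpull := condExp_mul_of_stronglyMeasurable_right hgT hI' (hYInt.sub hh₀Int)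
  have h0 : ∫ ω, (Y ω - h₀ (A ω, v (A ω, Z ω), W ω)) * π (A ω)
        * q (A ω, v (A ω, Z ω), Z ω) ∂P = 0 := by
    have h1 := integral_condExp (μ := P) (f := (fun ω => Y ω - h₀ (A ω, v (A ω, Z ω), W ω)) *
      ((fun x : 𝓐 × ℝ × 𝓩 => π x.1 * q x) ∘ (fun ω => (A ω, v (A ω, Z ω), Z ω)))) hm
    have h2 : ∫ ω, (P[(fun ω => Y ω - h₀ (A ω, v (A ω, Z ω), W ω)) *
      ((fun x : 𝓐 × ℝ × 𝓩 => π x.1 * q x) ∘ (fun ω => (A ω, v (A ω, Z ω), Z ω))) |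
        MeasurableSpace.comap (fun ω => (A ω, v (A ω, Z ω), Z ω)) inferInstance]) ω ∂P = 0 := by
      apply integral_eq_zero_of_ae
      filter_upwards [hpull, hobs] with ω h3 h4
      rw [h3, Pi.mul_apply, h4]
      simp
    rw [← h2, h1]
    refine integral_congr_ae (Filter.Eventually.of_forall fun ω => ?_)
    simp [mul_assoc]
  rw [integral_add hI hI2.integral_prod_right, h0, zero_add]
end
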